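/- arXiv:2308.13673 — 6 statements merged into one kernel-verified Lean document; each statement's English description precedes it below -/
import Mathlib

section
/- Let θ1, θ2 : ℝ → ℝ be continuous 2π-periodic functions, and let K : [0,1] × [0,2π] → ℝ² be defined by K(s,ϑ) = [s·exp(θ1(ϑ)) + (1−s)·exp(θ2(ϑ))]·v(ϑ). Then the symmetric difference A(θ1) Δ A(θ2) of the two star-shaped sets is contained in the image K([0,1] × [0,2π]). -/
open Set Real

/-- The direction vector `v(ϑ) = (cos ϑ, sin ϑ)`. -/
noncomputable def vdir (ϑ : ℝ) : ℝ × ℝ := (Real.cos ϑ, Real.sin ϑ)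

/-- The star-shaped set `A(θ) = {s·exp(θ(ϑ))·v(ϑ) : 0 ≤ s ≤ 1, 0 ≤ ϑ ≤ 2π}` centered
at the origin. -/
noncomputable def starSet (θ : ℝ → ℝ) : Set (ℝ × ℝ) :=
  {p : ℝ × ℝ | ∃ s ∈ Set.Icc (0 : ℝ) 1, ∃ ϑ ∈ Set.Icc (0 : ℝ) (2 * π),
    p = (s * Real.exp (θ ϑ)) • vdir ϑ}

/-! On a single ray the claim is one-dimensional: in a linear order
`[[a, c]] ⊆ [[a, b]] ∪ [[b, c]]`, so a point of the ray which lies between the origin and the first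
boundary curve, but not between the origin and the second one, lies between the two curves. -/

section RadialSets

open scoped symmDiff

variable {ι 𝕜 E : Type*}

section LinearOrder

variable [LinearOrder 𝕜] [SMul 𝕜 E]

/-- The region swept out between the curves `i ↦ r₁ i • v i` and `i ↦ r₂ i • v i` along the
directions `v i` with `i ∈ I`. The intervals of radii are unordered, so the two curves may cross. -/
def radialBand (r₁ r₂ : ι → 𝕜) (v : ι → E) (I : Set ι) : Set E :=
  ⋃ i ∈ I, (· • v i) '' uIcc (r₁ i) (r₂ i)

theorem radialBand_comm (r₁ r₂ : ι → 𝕜) (v : ι → E) (I : Set ι) :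
    radialBand r₁ r₂ v I = radialBand r₂ r₁ v I := by
  simp only [radialBand, uIcc_comm]

theorem radialBand_subset_radialBand_union_radialBand (r₀ r₁ r₂ : ι → 𝕜) (v : ι → E) (I : Set ι) :
    radialBand r₀ r₂ v I ⊆ radialBand r₀ r₁ v I ∪ radialBand r₁ r₂ v I := by
  simp only [radialBand, ← iUnion_union_distrib, ← image_union]
  exact iUnion₂_mono fun _ _ ↦ image_mono uIcc_subset_uIcc_union_uIcc

theorem radialBand_symmDiff_subset (r₀ r₁ r₂ : ι → 𝕜) (v : ι → E) (I : Set ι) :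
    radialBand r₀ r₁ v I ∆ radialBand r₀ r₂ v I ⊆ radialBand r₁ r₂ v I := by
  refine union_subset (sdiff_subset_iff.2 ?_) (sdiff_subset_iff.2 ?_)
  · rw [radialBand_comm r₁ r₂]
    exact radialBand_subset_radialBand_union_radialBand r₀ r₂ r₁ v I
  · exact radialBand_subset_radialBand_union_radialBand r₀ r₁ r₂ v I

end LinearOrder

section Field

variable [Field 𝕜] [LinearOrder 𝕜] [SMul 𝕜 E]

/-- The union of the segments from the origin to the points `r i • v i` with `i ∈ I`; `starSet θ` is
the case of the radius `exp ∘ θ` and the directions `vdir`. -/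
def radialSet (r : ι → 𝕜) (v : ι → E) (I : Set ι) : Set E :=
  {p | ∃ s ∈ Icc (0 : 𝕜) 1, ∃ i ∈ I, p = (s * r i) • v i}

variable [IsStrictOrderedRing 𝕜]

theorem image_mul_add_one_sub_mul_Icc (a b : 𝕜) :
    (fun s ↦ s * a + (1 - s) * b) '' Icc 0 1 = uIcc a b := by
  rw [uIcc_comm, ← segment_eq_uIcc, segment_eq_image]
  simp only [smul_eq_mul, add_comm]

theorem radialBand_eq_image (r₁ r₂ : ι → 𝕜) (v : ι → E) (I : Set ι) :
    radialBand r₁ r₂ v I =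
      (fun q : 𝕜 × ι ↦ (q.1 * r₁ q.2 + (1 - q.1) * r₂ q.2) • v q.2) '' (Icc 0 1 ×ˢ I) := by
  simp only [radialBand, ← image_mul_add_one_sub_mul_Icc, image_image]
  ext p
  simp only [mem_iUnion, mem_image, mem_prod, Prod.exists]
  grind

theorem radialSet_eq_radialBand (r : ι → 𝕜) (v : ι → E) (I : Set ι) :
    radialSet r v I = radialBand 0 r v I := by
  rw [radialBand_comm, radialBand_eq_image]
  ext p
  simp only [radialSet, mem_ofPred_eq, mem_image, mem_prod, Prod.exists, Pi.zero_apply, mul_zero,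
    add_zero]
  grind

theorem stmt0_general (r₁ r₂ : ι → 𝕜) (v : ι → E) (I : Set ι) :
    radialSet r₁ v I ∆ radialSet r₂ v I ⊆
      (fun q : 𝕜 × ι ↦ (q.1 * r₁ q.2 + (1 - q.1) * r₂ q.2) • v q.2) '' (Icc 0 1 ×ˢ I) := by
  rw [radialSet_eq_radialBand, radialSet_eq_radialBand, ← radialBand_eq_image]
  exact radialBand_symmDiff_subset 0 r₁ r₂ v I

end Field

end RadialSets

/-- The symmetric difference `A(θ1) Δ A(θ2)` is contained in the image of
`K(s,ϑ) = [s·exp(θ1(ϑ)) + (1−s)·exp(θ2(ϑ))]·v(ϑ)` on `[0,1] × [0,2π]`. -/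
theorem stmt0 (θ1 θ2 : ℝ → ℝ) (h1 : Continuous θ1) (h2 : Continuous θ2)
    (hp1 : Function.Periodic θ1 (2 * π)) (hp2 : Function.Periodic θ2 (2 * π)) :
    (starSet θ1 \ starSet θ2) ∪ (starSet θ2 \ starSet θ1) ⊆
      (fun q : ℝ × ℝ =>
          (q.1 * Real.exp (θ1 q.2) + (1 - q.1) * Real.exp (θ2 q.2)) • vdir q.2) ''
        (Set.Icc (0 : ℝ) 1 ×ˢ Set.Icc (0 : ℝ) (2 * π)) :=
  stmt0_general (fun ϑ ↦ Real.exp (θ1 ϑ)) (fun ϑ ↦ Real.exp (θ2 ϑ)) vdir (Icc 0 (2 * π))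
end

section
/- For every M > 0 there exists a constant C > 0, depending only on M, such that for all continuously differentiable 2π-periodic functions θ1, θ2 : ℝ → ℝ with sup|θi| + sup|θi'| ≤ M for i = 1,2, the two-dimensional Lebesgue measure of the symmetric difference satisfies vol(A(θ1) Δ A(θ2)) ≤ C·sup_{ϑ}|θ1(ϑ) − θ2(ϑ)|. -/
open Set Real MeasureTheory

/-! In polar coordinates `A(θ)` is the region `r ≤ exp (θ φ)`. The symmetric difference of two such
regions is therefore the region where `r` lies between `exp (θ1 φ)` and `exp (θ2 φ)`, whose area is
`∫ |exp (2 θ1 φ) - exp (2 θ2 φ)| / 2 dφ`. The mean value inequality bounds the integrand by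
`exp (2 K) |θ1 φ - θ2 φ|` as soon as both functions are at most `K`. -/

open scoped symmDiff Interval

theorem polarCoord_fst_smul_vdir (p : ℝ × ℝ) : (polarCoord p).1 • vdir (polarCoord p).2 = p := by
  let z := Complex.equivRealProd.symm p
  have polarCoord_eq : polarCoord p = (‖z‖, z.arg) := Complex.polarCoord_apply z
  rw [polarCoord_eq]
  exact Prod.ext (Complex.norm_mul_cos_arg z) (Complex.norm_mul_sin_arg z)

theorem polarCoord_smul_vdir_fst {r : ℝ} (hr : 0 ≤ r) (t : ℝ) :
    (polarCoord (r • vdir t)).1 = r := by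
  simp only [polarCoord_apply, vdir, Prod.smul_mk, smul_eq_mul]
  rw [mul_pow, mul_pow, ← mul_add, cos_sq_add_sin_sq, mul_one, sqrt_sq hr]

theorem polarCoord_smul_vdir_snd {r : ℝ} (hr : 0 < r) (t : ℝ) :
    ((polarCoord (r • vdir t)).2 : Real.Angle) = t := by
  have h := Complex.arg_mul_cos_add_sin_mul_I_coe_angle hr t
  rw [Real.Angle.cos_coe, Real.Angle.sin_coe] at h
  have polar_form : Complex.equivRealProd.symm (r • vdir t) = r * (cos t + sin t * Complex.I) :=
    Complex.ext (by simp [vdir]) (by simp [vdir])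
  rwa [← polar_form] at h

theorem vdir_periodic : Function.Periodic vdir (2 * π) := fun t =>
  Prod.ext (cos_periodic t) (sin_periodic t)

theorem measurable_polarCoord : Measurable polarCoord := by
  change Measurable fun p : ℝ × ℝ =>
    (√(p.1 ^ 2 + p.2 ^ 2), Complex.arg (Complex.measurableEquivRealProd.symm p))
  fun_prop

theorem volume_preimage_polarCoord {s : Set (ℝ × ℝ)} (hs : MeasurableSet s) :
    volume (polarCoord ⁻¹' s) = ∫⁻ p in s ∩ polarCoord.target, ENNReal.ofReal p.1 := by
  rw [← lintegral_indicator_one (measurable_polarCoord hs), ← lintegral_comp_polarCoord_symm,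
    ← setLIntegral_indicator hs]
  refine setLIntegral_congr_fun polarCoord.open_target.measurableSet fun p hp => ?_
  have mem_preimage_iff : polarCoord.symm p ∈ polarCoord ⁻¹' s ↔ p ∈ s := by
    rw [mem_preimage, polarCoord.right_inv hp]
  by_cases hps : p ∈ s
  · simp only [indicator_of_mem hps, indicator_of_mem (mem_preimage_iff.2 hps), Pi.one_apply,
      smul_eq_mul, mul_one]
  · simp only [indicator_of_notMem hps, indicator_of_notMem (mt mem_preimage_iff.1 hps), smul_zero]

theorem lintegral_uIoc_ofReal {a b : ℝ} (ha : 0 ≤ a) (hb : 0 ≤ b) :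
    ∫⁻ r in Ι a b, ENNReal.ofReal r = ENNReal.ofReal (|a ^ 2 - b ^ 2| / 2) := by
  wlog hab : a ≤ b generalizing a b
  · rw [uIoc_comm, abs_sub_comm, this hb ha (le_of_not_ge hab)]
  rw [uIoc_of_le hab, ← ofReal_integral_eq_lintegral_ofReal
    (intervalIntegrable_iff_integrableOn_Ioc_of_le hab |>.1 intervalIntegral.intervalIntegrable_id)
    (ae_restrict_of_forall_mem measurableSet_Ioc fun r hr => ha.trans hr.1.le),
    ← intervalIntegral.integral_of_le hab, integral_id, abs_sub_comm,
    abs_of_nonneg (sub_nonneg.2 (pow_le_pow_left₀ ha hab 2))]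

theorem volume_polarCoord_mem_uIoc {f g : ℝ → ℝ} (hf : Measurable f) (hg : Measurable g)
    (hf0 : ∀ φ, 0 ≤ f φ) (hg0 : ∀ φ, 0 ≤ g φ) :
    volume {p | (polarCoord p).1 ∈ Ι (f (polarCoord p).2) (g (polarCoord p).2)} =
      ∫⁻ φ in Ioo (-π) π, ENNReal.ofReal (|f φ ^ 2 - g φ ^ 2| / 2) := by
  let s : Set (ℝ × ℝ) := {q | q.1 ∈ Ι (f q.2) (g q.2)}
  have hs : MeasurableSet s :=
    (measurableSet_lt ((hf.comp measurable_snd).min (hg.comp measurable_snd)) measurable_fst).inter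
      (measurableSet_le measurable_fst ((hf.comp measurable_snd).max (hg.comp measurable_snd)))
  have uIoc_subset (φ : ℝ) : Ι (f φ) (g φ) ⊆ Ioi 0 := fun r hr =>
    (le_min (hf0 φ) (hg0 φ)).trans_lt hr.1
  calc volume (polarCoord ⁻¹' s)
      = ∫⁻ p in Ioi 0 ×ˢ Ioo (-π) π, s.indicator (fun p => ENNReal.ofReal p.1) p :=
        (volume_preimage_polarCoord hs).trans (setLIntegral_indicator hs _).symm
    _ = ∫⁻ φ in Ioo (-π) π, ∫⁻ r in Ioi 0, s.indicator (fun p => ENNReal.ofReal p.1) (r, φ) := by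
        rw [Measure.volume_eq_prod, ← Measure.prod_restrict,
          lintegral_prod_symm' _ (measurable_fst.ennreal_ofReal.indicator hs)]
    _ = ∫⁻ φ in Ioo (-π) π, ∫⁻ r in Ι (f φ) (g φ), ENNReal.ofReal r := by
        refine lintegral_congr fun φ => ?_
        change ∫⁻ r in Ioi 0, (Ι (f φ) (g φ)).indicator ENNReal.ofReal r = _
        rw [setLIntegral_indicator measurableSet_uIoc, inter_eq_left.2 (uIoc_subset φ)]
    _ = ∫⁻ φ in Ioo (-π) π, ENNReal.ofReal (|f φ ^ 2 - g φ ^ 2| / 2) :=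
        lintegral_congr fun φ => lintegral_uIoc_ofReal (hf0 φ) (hg0 φ)

theorem mem_starSet_iff {θ : ℝ → ℝ} (hθ : Function.Periodic θ (2 * π)) {p : ℝ × ℝ} :
    p ∈ starSet θ ↔ (polarCoord p).1 ≤ exp (θ (polarCoord p).2) := by
  constructor
  · rintro ⟨s, ⟨hs0, hs1⟩, t, -, rfl⟩
    have hr : 0 ≤ s * exp (θ t) := by positivity
    rw [polarCoord_smul_vdir_fst hr]
    obtain hr | hr := hr.eq_or_lt
    · exact hr ▸ (exp_pos _).le
    · have same_value : θ (polarCoord ((s * exp (θ t)) • vdir t)).2 = θ t :=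
        congrArg hθ.lift (polarCoord_smul_vdir_snd hr t)
      rw [same_value]
      exact mul_le_of_le_one_left (exp_pos _).le hs1
  · intro h
    set r := (polarCoord p).1
    set φ := (polarCoord p).2
    have boundary_periodic : Function.Periodic (fun t => exp (θ t) • vdir t) (2 * π) := fun t => by
      simp only [hθ t, vdir_periodic t]
    obtain ⟨t, ht, hφt⟩ := boundary_periodic.exists_mem_Ico₀ two_pi_pos φ
    have hr : 0 ≤ r := sqrt_nonneg _
    refine ⟨r / exp (θ φ), ⟨by positivity, div_le_one_of_le₀ h (exp_pos _).le⟩, t,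
      Ico_subset_Icc_self ht, ?_⟩
    rw [mul_smul, ← hφt, smul_smul, div_mul_cancel₀ _ (exp_ne_zero _), polarCoord_fst_smul_vdir]

theorem starSet_symmDiff_eq {θ1 θ2 : ℝ → ℝ} (hp1 : Function.Periodic θ1 (2 * π))
    (hp2 : Function.Periodic θ2 (2 * π)) :
    starSet θ1 ∆ starSet θ2 =
      {p | (polarCoord p).1 ∈ Ι (exp (θ1 (polarCoord p).2)) (exp (θ2 (polarCoord p).2))} := by
  ext p
  simp only [mem_symmDiff, mem_starSet_iff hp1, mem_starSet_iff hp2, not_le, mem_ofPred_eq,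
    mem_uIoc]
  tauto

theorem volume_starSet_symmDiff {θ1 θ2 : ℝ → ℝ} (h1 : Measurable θ1) (h2 : Measurable θ2)
    (hp1 : Function.Periodic θ1 (2 * π)) (hp2 : Function.Periodic θ2 (2 * π)) :
    volume (starSet θ1 ∆ starSet θ2) =
      ∫⁻ φ in Ioo (-π) π, ENNReal.ofReal (|exp (2 * θ1 φ) - exp (2 * θ2 φ)| / 2) := by
  have exp_two_mul (x : ℝ) : exp (2 * x) = exp x ^ 2 := by rw [sq, ← exp_add, two_mul]
  simp only [exp_two_mul]
  rw [starSet_symmDiff_eq hp1 hp2]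
  exact volume_polarCoord_mem_uIoc h1.exp h2.exp (fun _ => (exp_pos _).le) fun _ => (exp_pos _).le

theorem abs_exp_sub_exp_le {a b K : ℝ} (ha : a ≤ K) (hb : b ≤ K) :
    |exp a - exp b| ≤ exp K * |a - b| :=
  (convex_Iic K).norm_image_sub_le_of_norm_deriv_le (fun _ _ => differentiableAt_exp)
    (fun x hx => by simpa using hx) hb ha

theorem stmt1_general {θ1 θ2 : ℝ → ℝ} (h1 : Measurable θ1) (h2 : Measurable θ2)
    (hp1 : Function.Periodic θ1 (2 * π)) (hp2 : Function.Periodic θ2 (2 * π)) {K : ℝ}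
    (hK1 : ∀ x, θ1 x ≤ K) (hK2 : ∀ x, θ2 x ≤ K) (hbdd : BddAbove (range fun x => |θ1 x - θ2 x|)) :
    volume (starSet θ1 ∆ starSet θ2) ≤
      ENNReal.ofReal (2 * π * exp (2 * K) * ⨆ x, |θ1 x - θ2 x|) := by
  have integrand_le (φ : ℝ) : |exp (2 * θ1 φ) - exp (2 * θ2 φ)| / 2 ≤
      exp (2 * K) * ⨆ x, |θ1 x - θ2 x| := by
    calc |exp (2 * θ1 φ) - exp (2 * θ2 φ)| / 2
        ≤ exp (2 * K) * |2 * θ1 φ - 2 * θ2 φ| / 2 := by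
          gcongr
          exact abs_exp_sub_exp_le (by linarith [hK1 φ]) (by linarith [hK2 φ])
      _ = exp (2 * K) * |θ1 φ - θ2 φ| := by
          rw [← mul_sub, abs_mul, abs_two]
          ring
      _ ≤ exp (2 * K) * ⨆ x, |θ1 x - θ2 x| := by
          gcongr
          exact le_ciSup hbdd φ
  calc volume (starSet θ1 ∆ starSet θ2)
      = ∫⁻ φ in Ioo (-π) π, ENNReal.ofReal (|exp (2 * θ1 φ) - exp (2 * θ2 φ)| / 2) :=
        volume_starSet_symmDiff h1 h2 hp1 hp2
    _ ≤ ∫⁻ _ in Ioo (-π) π, ENNReal.ofReal (exp (2 * K) * ⨆ x, |θ1 x - θ2 x|) :=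
        lintegral_mono fun φ => ENNReal.ofReal_le_ofReal (integrand_le φ)
    _ = ENNReal.ofReal (2 * π * exp (2 * K) * ⨆ x, |θ1 x - θ2 x|) := by
        rw [setLIntegral_const, Real.volume_Ioo, ← ENNReal.ofReal_mul' (by linarith [pi_pos])]
        ring_nf

theorem le_of_iSup_abs_add_iSup_abs_le {ι κ : Type*} {f : ι → ℝ} {g : κ → ℝ} {M : ℝ}
    (hf : BddAbove (range fun x => |f x|)) (hM : (⨆ x, |f x|) + (⨆ y, |g y|) ≤ M) (x : ι) :
    f x ≤ M :=
  calc f x ≤ ⨆ x, |f x| := (le_abs_self _).trans (le_ciSup hf x)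
    _ ≤ (⨆ x, |f x|) + (⨆ y, |g y|) :=
        le_add_of_nonneg_right (Real.iSup_nonneg fun _ => abs_nonneg _)
    _ ≤ M := hM

/-- For every `M > 0` there is `C > 0` depending only on `M` such that, for all `C¹`
`2π`-periodic `θ1, θ2` with `sup|θᵢ| + sup|θᵢ'| ≤ M`, the two-dimensional Lebesgue
measure of `A(θ1) Δ A(θ2)` is at most `C·sup_ϑ |θ1 ϑ − θ2 ϑ|`. -/
theorem stmt1 (M : ℝ) (hM : 0 < M) :
    ∃ C : ℝ, 0 < C ∧
      ∀ θ1 θ2 : ℝ → ℝ,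
        ContDiff ℝ 1 θ1 → ContDiff ℝ 1 θ2 →
        Function.Periodic θ1 (2 * π) → Function.Periodic θ2 (2 * π) →
        (⨆ x, |θ1 x|) + (⨆ x, |deriv θ1 x|) ≤ M →
        (⨆ x, |θ2 x|) + (⨆ x, |deriv θ2 x|) ≤ M →
        volume ((starSet θ1 \ starSet θ2) ∪ (starSet θ2 \ starSet θ1)) ≤
          ENNReal.ofReal (C * ⨆ ϑ, |θ1 ϑ - θ2 ϑ|) := by
  have bdd {θ : ℝ → ℝ} (h : ContDiff ℝ 1 θ) (hp : Function.Periodic θ (2 * π)) :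
      BddAbove (range fun x => |θ x|) :=
    ((hp.comp abs).compact_of_continuous two_pi_pos.ne' h.continuous.abs).bddAbove
  exact ⟨2 * π * exp (2 * M), by positivity, fun θ1 θ2 h1 h2 hp1 hp2 hM1 hM2 =>
    stmt1_general h1.continuous.measurable h2.continuous.measurable hp1 hp2
      (le_of_iSup_abs_add_iSup_abs_le (bdd h1 hp1) hM1)
      (le_of_iSup_abs_add_iSup_abs_le (bdd h2 hp2) hM2) (bdd (h1.sub h2) (hp1.sub hp2))⟩
end

section
/- Let D ⊆ ℝ² be a bounded measurable set, let κ1, κ2 > 0, and for a 2π-periodic function θ define Φ(θ) = κ1·1_{A(θ)} + κ2 (restricted to D). For every M > 0 there exists a constant C > 0, depending only on M and κ1, such that for all continuously differentiable 2π-periodic functions θ1, θ2 : ℝ → ℝ with sup|θi| + sup|θi'| ≤ M for i = 1,2, one has ‖Φ(θ1) − Φ(θ2)‖_{L²(D)} ≤ C·(sup_{ϑ}|θ1(ϑ) − θ2(ϑ)|)^{1/2}. -/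
open Set Real MeasureTheory

/-- The star-shaped inclusion parametrization `Φ(θ)(x) = κ1·1_{A(θ)}(x) + κ2`. -/
noncomputable def phiStar (κ1 κ2 : ℝ) (θ : ℝ → ℝ) (x : ℝ × ℝ) : ℝ :=
  κ1 * Set.indicator (starSet θ) (fun _ => (1 : ℝ)) x + κ2

/-!
Adding the constant `δ` to `θ` dilates `A(θ)` by the factor `exp δ`. So if `|θ - η| ≤ δ` and
`K = A(θ) ∪ A(η)`, the dilate `exp (-δ) • K` lies in `A(θ) ∩ A(η)`, and the symmetric difference
of the two sets lies in the shell `K \ exp (-δ) • K`, whose area is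
`(1 - exp (-2δ)) * |K| ≤ 2δ * |K|`. The square of `Φ(θ) - Φ(η)` is `κ1 ^ 2` on that symmetric
difference and vanishes elsewhere.
-/

open scoped Pointwise symmDiff

theorem abs_le_iSup_abs_of_periodic {f : ℝ → ℝ} {c : ℝ} (hf : Continuous f)
    (hp : Function.Periodic f c) (hc : c ≠ 0) (t : ℝ) : |f t| ≤ ⨆ x, |f x| :=
  le_ciSup (f := fun x => |f x|) ((hp.comp abs).compact_of_continuous hc hf.abs).bddAbove t

theorem le_of_iSup_abs_add_iSup_abs_le_s2 {f g : ℝ → ℝ} {c M : ℝ} (hf : Continuous f)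
    (hp : Function.Periodic f c) (hc : c ≠ 0) (h : (⨆ x, |f x|) + (⨆ x, |g x|) ≤ M) (t : ℝ) :
    f t ≤ M :=
  calc f t ≤ ⨆ x, |f x| := (le_abs_self _).trans (abs_le_iSup_abs_of_periodic hf hp hc t)
    _ ≤ (⨆ x, |f x|) + ⨆ x, |g x| := le_add_of_nonneg_right (iSup_nonneg fun _ => abs_nonneg _)
    _ ≤ M := h

section Dilation

variable {𝕜 E : Type*} [Ring 𝕜] [PartialOrder 𝕜] [AddRightMono 𝕜] [AddCommMonoid E]
  [SMulWithZero 𝕜 E] {s t : Set E} {r : 𝕜}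

theorem smul_subset_of_starConvex_zero (hs : StarConvex 𝕜 0 s) (hr₀ : 0 ≤ r) (hr₁ : r ≤ 1) :
    r • s ⊆ s :=
  smul_set_subset_iff.2 fun _ hx => starConvex_zero_iff.1 hs hx hr₀ hr₁

theorem symmDiff_subset_union_sdiff_smul_union (hs : StarConvex 𝕜 0 s) (ht : StarConvex 𝕜 0 t)
    (hr₀ : 0 ≤ r) (hr₁ : r ≤ 1) (hst : r • s ⊆ t) (hts : r • t ⊆ s) :
    s ∆ t ⊆ (s ∪ t) \ r • (s ∪ t) := by
  have hinter : r • (s ∪ t) ⊆ s ∩ t := by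
    rw [smul_set_union]
    exact union_subset (subset_inter (smul_subset_of_starConvex_zero hs hr₀ hr₁) hst)
      (subset_inter hts (smul_subset_of_starConvex_zero ht hr₀ hr₁))
  rw [symmDiff_eq_sup_sdiff_inf]
  exact sdiff_subset_sdiff_right hinter

end Dilation

section AddHaar

variable {E : Type*} [NormedAddCommGroup E] [NormedSpace ℝ E] [FiniteDimensional ℝ E]
  [MeasurableSpace E] [BorelSpace E] (μ : Measure E) [μ.IsAddHaarMeasure] {s t : Set E} {δ : ℝ}

theorem measureReal_sdiff_exp_neg_smul_le (hs : StarConvex ℝ 0 s) (hsm : MeasurableSet s)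
    (hfin : μ s ≠ ⊤) (hδ : 0 ≤ δ) :
    μ.real (s \ exp (-δ) • s) ≤ Module.finrank ℝ E * δ * μ.real s := by
  have hsub : exp (-δ) • s ⊆ s :=
    smul_subset_of_starConvex_zero hs (exp_nonneg _) (exp_le_one_iff.2 (neg_nonpos.2 hδ))
  calc μ.real (s \ exp (-δ) • s)
      = μ.real s - exp (-δ) ^ Module.finrank ℝ E * μ.real s := by
        rw [measureReal_sdiff hsub (hsm.const_smul_of_ne_zero (exp_ne_zero _)) hfin,
          measureReal_def μ (exp (-δ) • s), Measure.addHaar_smul, ENNReal.toReal_mul,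
          ENNReal.toReal_ofReal (abs_nonneg _), abs_of_nonneg (by positivity), measureReal_def]
    _ = (1 - exp (-(Module.finrank ℝ E * δ))) * μ.real s := by
        rw [← exp_nat_mul, mul_neg, one_sub_mul]
    _ ≤ Module.finrank ℝ E * δ * μ.real s := by
        gcongr
        linarith [one_sub_le_exp_neg (Module.finrank ℝ E * δ)]

theorem measureReal_symmDiff_le_of_exp_neg_smul_subset (hs : StarConvex ℝ 0 s)
    (ht : StarConvex ℝ 0 t) (hsm : MeasurableSet s) (htm : MeasurableSet t) (hs_fin : μ s ≠ ⊤)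
    (ht_fin : μ t ≠ ⊤) (hδ : 0 ≤ δ) (hst : exp (-δ) • s ⊆ t) (hts : exp (-δ) • t ⊆ s) :
    μ.real (s ∆ t) ≤ Module.finrank ℝ E * δ * μ.real (s ∪ t) := by
  have hfin : μ (s ∪ t) ≠ ⊤ := measure_union_ne_top hs_fin ht_fin
  calc μ.real (s ∆ t)
      ≤ μ.real ((s ∪ t) \ exp (-δ) • (s ∪ t)) :=
        measureReal_mono (symmDiff_subset_union_sdiff_smul_union hs ht (exp_nonneg _)
          (exp_le_one_iff.2 (neg_nonpos.2 hδ)) hst hts) (measure_ne_top_of_subset sdiff_subset hfin)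
    _ ≤ Module.finrank ℝ E * δ * μ.real (s ∪ t) :=
        measureReal_sdiff_exp_neg_smul_le μ (hs.union ht) (hsm.union htm) hfin hδ

end AddHaar

section StarSet

variable {θ η : ℝ → ℝ} {δ M : ℝ}

theorem starConvex_zero_starSet (θ : ℝ → ℝ) : StarConvex ℝ 0 (starSet θ) := by
  rw [starConvex_zero_iff]
  rintro _ ⟨s, hs, t, ht, rfl⟩ a ha₀ ha₁
  exact ⟨a * s, ⟨mul_nonneg ha₀ hs.1, mul_le_one₀ ha₁ hs.1 hs.2⟩, t, ht, by
    rw [smul_smul, mul_assoc]⟩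

theorem starSet_eq_image (θ : ℝ → ℝ) :
    starSet θ = (fun q : ℝ × ℝ => (q.1 * exp (θ q.2)) • vdir q.2) ''
      (Icc 0 1 ×ˢ Icc 0 (2 * π)) := by
  ext p
  simp only [starSet, mem_ofPred_eq, mem_image, mem_prod, Prod.exists]
  grind

theorem isCompact_starSet (hθ : ContinuousOn θ (Icc 0 (2 * π))) : IsCompact (starSet θ) := by
  rw [starSet_eq_image]
  refine (isCompact_Icc.prod isCompact_Icc).image_of_continuousOn ?_
  have hθsnd : ContinuousOn (fun q : ℝ × ℝ => θ q.2) (Icc 0 1 ×ˢ Icc 0 (2 * π)) :=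
    hθ.comp continuousOn_snd fun _ hq => hq.2
  have hvdir : Continuous vdir := continuous_cos.prodMk continuous_sin
  exact (continuousOn_fst.mul hθsnd.rexp).smul (hvdir.comp continuous_snd).continuousOn

theorem exp_neg_smul_starSet_subset (h : ∀ t ∈ Icc 0 (2 * π), θ t ≤ η t + δ) :
    exp (-δ) • starSet θ ⊆ starSet η := by
  rw [smul_set_subset_iff]
  rintro _ ⟨s, hs, t, ht, rfl⟩
  have hratio : exp (θ t - η t - δ) ≤ 1 := exp_le_one_iff.2 (by linarith [h t ht])
  have hradius : exp (-δ) * (s * exp (θ t)) = s * exp (θ t - η t - δ) * exp (η t) := by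
    rw [mul_left_comm, mul_assoc, ← exp_add, ← exp_add]
    ring_nf
  exact ⟨s * exp (θ t - η t - δ), ⟨mul_nonneg hs.1 (exp_nonneg _),
    mul_le_one₀ hs.2 (exp_nonneg _) hratio⟩, t, ht, by rw [smul_smul, hradius]⟩

theorem norm_vdir_le_one (t : ℝ) : ‖vdir t‖ ≤ 1 :=
  max_le (abs_cos_le_one t) (abs_sin_le_one t)

theorem starSet_subset_closedBall (h : ∀ t ∈ Icc 0 (2 * π), θ t ≤ M) :
    starSet θ ⊆ Metric.closedBall 0 (exp M) := by
  rintro _ ⟨s, hs, t, ht, rfl⟩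
  rw [mem_closedBall_zero_iff, norm_smul, norm_of_nonneg (mul_nonneg hs.1 (exp_nonneg _))]
  calc s * exp (θ t) * ‖vdir t‖
      ≤ 1 * exp M * 1 := by
        gcongr
        exacts [hs.2, h t ht, norm_vdir_le_one t]
    _ = exp M := by rw [one_mul, mul_one]

-- The norm of `ℝ × ℝ` is the maximum norm, so its balls are squares.
theorem volume_real_closedBall_prod (p : ℝ × ℝ) {r : ℝ} (hr : 0 ≤ r) :
    volume.real (Metric.closedBall p r) = (2 * r) ^ 2 := by
  rw [← closedBall_prod_same, Measure.volume_eq_prod, measureReal_prod_prod,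
    volume_real_closedBall hr, volume_real_closedBall hr, sq]

theorem volume_real_symmDiff_starSet_le (hθ : ContinuousOn θ (Icc 0 (2 * π)))
    (hη : ContinuousOn η (Icc 0 (2 * π))) (hθM : ∀ t ∈ Icc 0 (2 * π), θ t ≤ M)
    (hηM : ∀ t ∈ Icc 0 (2 * π), η t ≤ M)
    (hδ : ∀ t ∈ Icc 0 (2 * π), |θ t - η t| ≤ δ) :
    volume.real (starSet θ ∆ starSet η) ≤ 2 * δ * (2 * exp M) ^ 2 := by
  have hδ₀ : 0 ≤ δ := (abs_nonneg _).trans (hδ 0 ⟨le_rfl, two_pi_pos.le⟩)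
  have hθc := isCompact_starSet hθ
  have hηc := isCompact_starSet hη
  have hθη : exp (-δ) • starSet θ ⊆ starSet η :=
    exp_neg_smul_starSet_subset fun t ht => by linarith [(abs_le.1 (hδ t ht)).2]
  have hηθ : exp (-δ) • starSet η ⊆ starSet θ :=
    exp_neg_smul_starSet_subset fun t ht => by linarith [(abs_le.1 (hδ t ht)).1]
  have hball : starSet θ ∪ starSet η ⊆ Metric.closedBall 0 (exp M) :=
    union_subset (starSet_subset_closedBall hθM) (starSet_subset_closedBall hηM)
  calc volume.real (starSet θ ∆ starSet η)
      ≤ Module.finrank ℝ (ℝ × ℝ) * δ * volume.real (starSet θ ∪ starSet η) :=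
        measureReal_symmDiff_le_of_exp_neg_smul_subset volume (starConvex_zero_starSet θ)
          (starConvex_zero_starSet η) hθc.measurableSet hηc.measurableSet hθc.measure_ne_top
          hηc.measure_ne_top hδ₀ hθη hηθ
    _ ≤ Module.finrank ℝ (ℝ × ℝ) * δ * volume.real (Metric.closedBall (0 : ℝ × ℝ) (exp M)) := by
        gcongr
        exact measure_closedBall_lt_top.ne
    _ = 2 * δ * (2 * exp M) ^ 2 := by
        rw [volume_real_closedBall_prod 0 (exp_nonneg M), Module.finrank_prod,
          Module.finrank_self, Nat.cast_add, Nat.cast_one, one_add_one_eq_two]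

end StarSet

theorem sq_phiStar_sub_phiStar (κ1 κ2 : ℝ) (θ η : ℝ → ℝ) :
    (fun x => (phiStar κ1 κ2 θ x - phiStar κ1 κ2 η x) ^ 2) =
      (starSet θ ∆ starSet η).indicator fun _ => κ1 ^ 2 := by
  funext x
  by_cases hθ : x ∈ starSet θ <;> by_cases hη : x ∈ starSet η <;>
    simp [phiStar, hθ, hη, mem_symmDiff]

theorem setIntegral_sq_phiStar_sub_le (κ1 κ2 : ℝ) {θ η : ℝ → ℝ}
    (hθ : ContinuousOn θ (Icc 0 (2 * π))) (hη : ContinuousOn η (Icc 0 (2 * π)))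
    (D : Set (ℝ × ℝ)) :
    ∫ x in D, (phiStar κ1 κ2 θ x - phiStar κ1 κ2 η x) ^ 2 ≤
      κ1 ^ 2 * volume.real (starSet θ ∆ starSet η) := by
  have hθc := isCompact_starSet hθ
  have hηc := isCompact_starSet hη
  have hfin : volume (starSet θ ∆ starSet η) ≠ ⊤ :=
    measure_ne_top_of_subset symmDiff_subset_union (hθc.union hηc).measure_ne_top
  rw [sq_phiStar_sub_phiStar,
    integral_indicator_const _ (hθc.measurableSet.symmDiff hηc.measurableSet), smul_eq_mul,
    mul_comm]
  gcongr
  exact ENNReal.toReal_mono hfin (Measure.restrict_apply_le D _)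

theorem stmt2_general (κ1 κ2 : ℝ) (D : Set (ℝ × ℝ)) {θ η : ℝ → ℝ} {M δ : ℝ}
    (hθ : ContinuousOn θ (Icc 0 (2 * π))) (hη : ContinuousOn η (Icc 0 (2 * π)))
    (hθM : ∀ t ∈ Icc 0 (2 * π), θ t ≤ M) (hηM : ∀ t ∈ Icc 0 (2 * π), η t ≤ M)
    (hδ : ∀ t ∈ Icc 0 (2 * π), |θ t - η t| ≤ δ) :
    √(∫ x in D, (phiStar κ1 κ2 θ x - phiStar κ1 κ2 η x) ^ 2) ≤ √8 * |κ1| * exp M * √δ := by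
  have hδ₀ : 0 ≤ δ := (abs_nonneg _).trans (hδ 0 ⟨le_rfl, two_pi_pos.le⟩)
  rw [sqrt_le_left (by positivity)]
  calc ∫ x in D, (phiStar κ1 κ2 θ x - phiStar κ1 κ2 η x) ^ 2
      ≤ κ1 ^ 2 * volume.real (starSet θ ∆ starSet η) := setIntegral_sq_phiStar_sub_le κ1 κ2 hθ hη D
    _ ≤ κ1 ^ 2 * (2 * δ * (2 * exp M) ^ 2) := by
        gcongr
        exact volume_real_symmDiff_starSet_le hθ hη hθM hηM hδ
    _ = (√8 * |κ1| * exp M * √δ) ^ 2 := by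
        simp only [mul_pow, sq_abs, sq_sqrt hδ₀, sq_sqrt (show (0 : ℝ) ≤ 8 by norm_num)]
        ring

/-- Conditional `1/2`-Hölder continuity of the star-shaped set parametrization: for every
`M > 0` there is `C > 0` depending only on `M` and `κ1` such that for all bounded
measurable `D ⊆ ℝ²` and all `C¹` `2π`-periodic `θ1, θ2` with `sup|θᵢ| + sup|θᵢ'| ≤ M`,
`‖Φ(θ1) − Φ(θ2)‖_{L²(D)} ≤ C·(sup_ϑ |θ1 ϑ − θ2 ϑ|)^{1/2}`. -/
theorem stmt2 (κ1 κ2 : ℝ) (hκ1 : 0 < κ1) (hκ2 : 0 < κ2) (M : ℝ) (hM : 0 < M) :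
    ∃ C : ℝ, 0 < C ∧
      ∀ D : Set (ℝ × ℝ), MeasurableSet D → Bornology.IsBounded D →
      ∀ θ1 θ2 : ℝ → ℝ,
        ContDiff ℝ 1 θ1 → ContDiff ℝ 1 θ2 →
        Function.Periodic θ1 (2 * π) → Function.Periodic θ2 (2 * π) →
        (⨆ x, |θ1 x|) + (⨆ x, |deriv θ1 x|) ≤ M →
        (⨆ x, |θ2 x|) + (⨆ x, |deriv θ2 x|) ≤ M →
        Real.sqrt (∫ x in D, (phiStar κ1 κ2 θ1 x - phiStar κ1 κ2 θ2 x) ^ 2) ≤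
          C * Real.sqrt (⨆ ϑ, |θ1 ϑ - θ2 ϑ|) := by
  refine ⟨√8 * |κ1| * exp M, by positivity, fun D _ _ θ1 θ2 h1 h2 hp1 hp2 hM1 hM2 => ?_⟩
  exact stmt2_general κ1 κ2 D h1.continuous.continuousOn h2.continuous.continuousOn
    (fun t _ => le_of_iSup_abs_add_iSup_abs_le_s2 h1.continuous hp1 two_pi_pos.ne' hM1 t)
    (fun t _ => le_of_iSup_abs_add_iSup_abs_le_s2 h2.continuous hp2 two_pi_pos.ne' hM2 t)
    (fun t _ => abs_le_iSup_abs_of_periodic (h1.continuous.sub h2.continuous) (hp1.sub hp2)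
      two_pi_pos.ne' t)
end

section
/- Let D = {x ∈ ℝ² : |x| < 1/2}, let κ1, κ2 > 0, and define Φ(θ)(x) = κ1·1_{θ(x) ≥ 0} + κ2. For n ≥ 1 let θ_n(x) = 1/n + |x|^{2n} and θ̃_n = −θ_n. Then: (i) sup_{x ∈ D} |θ_n(x) − θ̃_n(x)| ≤ 2/n + 2^{1−2n}, which tends to 0 as n → ∞; (ii) Φ(θ_n)(x) = κ1 + κ2 and Φ(θ̃_n)(x) = κ2 for every x ∈ D, so that ‖Φ(θ_n) − Φ(θ̃_n)‖_{L²(D)} = κ1·(π/4)^{1/2} for every n, which does not tend to 0. In particular the level set parametrization Φ is not uniformly continuous from the supremum metric to L²(D). -/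
open MeasureTheory Real Filter

/-- The Heaviside function `H(z) = 1_{z ≥ 0}`. -/
noncomputable def heaviside (z : ℝ) : ℝ := if 0 ≤ z then 1 else 0

/-- The level set parametrization `Φ(θ)(x) = κ1·H(θ(x)) + κ2`. -/
noncomputable def phiLS (κ1 κ2 : ℝ) (θ : EuclideanSpace ℝ (Fin 2) → ℝ)
    (x : EuclideanSpace ℝ (Fin 2)) : ℝ := κ1 * heaviside (θ x) + κ2

/-- The level set functions `θ_n(x) = 1/n + |x|^{2n}`. -/
noncomputable def θseq (n : ℕ) (x : EuclideanSpace ℝ (Fin 2)) : ℝ :=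
  1 / n + ‖x‖ ^ (2 * n)

/-! Where `θ > 0`, the values of `Φ(θ)` and `Φ(-θ)` differ by exactly `κ1`, however small `θ` is.
So a positive `θ` that is uniformly small on `D` is close to `-θ` in the supremum metric, while
`Φ(θ)` and `Φ(-θ)` stay at the fixed distance `|κ1| |D|^{1/2}` in `L²(D)`. -/

section LevelSetMap

variable (κ1 κ2 : ℝ) {θ : EuclideanSpace ℝ (Fin 2) → ℝ} {x : EuclideanSpace ℝ (Fin 2)}

theorem phiLS_of_nonneg (h : 0 ≤ θ x) : phiLS κ1 κ2 θ x = κ1 + κ2 := by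
  simp [phiLS, heaviside, h]

theorem phiLS_of_neg (h : θ x < 0) : phiLS κ1 κ2 θ x = κ2 := by
  simp [phiLS, heaviside, h.not_ge]

theorem phiLS_sub_phiLS_neg_of_pos (h : 0 < θ x) :
    phiLS κ1 κ2 θ x - phiLS κ1 κ2 (fun y => -θ y) x = κ1 := by
  rw [phiLS_of_nonneg κ1 κ2 h.le, phiLS_of_neg κ1 κ2 (neg_neg_of_pos h), add_sub_cancel_right]

-- For a measure of infinite mass both sides take the junk value `0`.
theorem sqrt_integral_sq_phiLS_sub_phiLS_neg {μ : Measure (EuclideanSpace ℝ (Fin 2))}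
    (hθ : ∀ᵐ x ∂μ, 0 < θ x) :
    √(∫ x, (phiLS κ1 κ2 θ x - phiLS κ1 κ2 (fun y => -θ y) x) ^ 2 ∂μ) =
      |κ1| * √(μ.real Set.univ) := by
  have hsq : ∀ᵐ x ∂μ, (phiLS κ1 κ2 θ x - phiLS κ1 κ2 (fun y => -θ y) x) ^ 2 = κ1 ^ 2 :=
    hθ.mono fun x hx => by rw [phiLS_sub_phiLS_neg_of_pos κ1 κ2 hx]
  rw [integral_congr_ae hsq, integral_const, smul_eq_mul, mul_comm, sqrt_mul (sq_nonneg κ1),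
    sqrt_sq_eq_abs]

end LevelSetMap

theorem θseq_pos {n : ℕ} (hn : 1 ≤ n) (x : EuclideanSpace ℝ (Fin 2)) : 0 < θseq n x := by
  have : (0 : ℝ) < n := by exact_mod_cast hn
  unfold θseq
  positivity

theorem abs_θseq_sub_neg_le (n : ℕ) {x : EuclideanSpace ℝ (Fin 2)} {r : ℝ} (hx : ‖x‖ ≤ r) :
    |θseq n x - (-θseq n x)| ≤ 2 / n + 2 * r ^ (2 * n) :=
  calc |θseq n x - (-θseq n x)| = |2 / n + 2 * ‖x‖ ^ (2 * n)| := by unfold θseq; ring_nf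
    _ = 2 / n + 2 * ‖x‖ ^ (2 * n) := abs_of_nonneg (by positivity)
    _ ≤ 2 / n + 2 * r ^ (2 * n) := by gcongr

theorem tendsto_two_div_add_two_mul_pow {r : ℝ} (hr : |r| < 1) :
    Tendsto (fun n : ℕ => 2 / (n : ℝ) + 2 * r ^ (2 * n)) atTop (nhds 0) := by
  have hpow : Tendsto (fun n : ℕ => r ^ (2 * n)) atTop (nhds 0) :=
    (tendsto_pow_atTop_nhds_zero_of_abs_lt_one hr).comp (tendsto_id.const_mul_atTop' two_pos)
  simpa using (tendsto_const_div_atTop_nhds_zero_nat (2 : ℝ)).add (hpow.const_mul 2)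

theorem two_zpow_one_sub_two_mul (n : ℕ) :
    (2 : ℝ) ^ (1 - 2 * (n : ℤ)) = 2 * (1 / 2) ^ (2 * n) := by
  rw [zpow_sub₀ two_ne_zero, zpow_one, one_div, inv_pow, div_eq_mul_inv]
  norm_cast

theorem volume_real_ball_fin_two (x : EuclideanSpace ℝ (Fin 2)) {r : ℝ} (hr : 0 ≤ r) :
    volume.real (Metric.ball x r) = r ^ 2 * π := by
  simp [measureReal_def, hr, pi_nonneg]

theorem stmt4_general (κ1 κ2 : ℝ) (hκ1 : κ1 ≠ 0) {D : Set (EuclideanSpace ℝ (Fin 2))} {r : ℝ}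
    (hr : r < 1) (hDr : D ⊆ Metric.closedBall 0 r) (hD : volume D ≠ 0) :
    (∀ n : ℕ, 1 ≤ n → ∀ x ∈ D, |θseq n x - (-θseq n x)| ≤ 2 / n + 2 * r ^ (2 * n)) ∧
    Tendsto (fun n : ℕ => 2 / (n : ℝ) + 2 * r ^ (2 * n)) atTop (nhds 0) ∧
    (∀ n : ℕ, 1 ≤ n → ∀ x ∈ D,
        phiLS κ1 κ2 (θseq n) x = κ1 + κ2 ∧ phiLS κ1 κ2 (fun y => -θseq n y) x = κ2) ∧
    (∀ n : ℕ, 1 ≤ n →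
        √(∫ x in D, (phiLS κ1 κ2 (θseq n) x - phiLS κ1 κ2 (fun y => -θseq n y) x) ^ 2) =
          |κ1| * √(volume.real D)) ∧
    ¬ Tendsto (fun n : ℕ =>
        √(∫ x in D, (phiLS κ1 κ2 (θseq n) x - phiLS κ1 κ2 (fun y => -θseq n y) x) ^ 2))
      atTop (nhds 0) := by
  have norm_le {x} (hx : x ∈ D) : ‖x‖ ≤ r := mem_closedBall_zero_iff.mp (hDr hx)
  obtain ⟨x₀, hx₀⟩ := nonempty_of_measure_ne_zero hD
  have hr_abs : |r| < 1 := by rwa [abs_of_nonneg ((norm_nonneg x₀).trans (norm_le hx₀))]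
  have volume_pos : 0 < volume.real D :=
    ENNReal.toReal_pos hD (Metric.isBounded_closedBall.subset hDr).measure_lt_top.ne
  have L2_dist (n : ℕ) (hn : 1 ≤ n) :
      √(∫ x in D, (phiLS κ1 κ2 (θseq n) x - phiLS κ1 κ2 (fun y => -θseq n y) x) ^ 2) =
        |κ1| * √(volume.real D) := by
    rw [sqrt_integral_sq_phiLS_sub_phiLS_neg κ1 κ2 (ae_of_all _ (θseq_pos hn)),
      measureReal_restrict_apply_univ]
  refine ⟨fun n _ x hx => abs_θseq_sub_neg_le n (norm_le hx),
    tendsto_two_div_add_two_mul_pow hr_abs,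
    fun n hn x _ => ⟨phiLS_of_nonneg κ1 κ2 (θseq_pos hn x).le,
      phiLS_of_neg κ1 κ2 (neg_neg_of_pos (θseq_pos hn x))⟩, L2_dist, ?_⟩
  rw [tendsto_congr' ((eventually_ge_atTop 1).mono L2_dist), tendsto_const_nhds_iff]
  positivity

/-- On `D = {|x| < 1/2}`, with `θ_n(x) = 1/n + |x|^{2n}` and `θ̃_n = −θ_n`:
(i) `sup_D |θ_n − θ̃_n| ≤ 2/n + 2^{1−2n} → 0`; (ii) `Φ(θ_n) = κ1 + κ2` and
`Φ(θ̃_n) = κ2` on `D`, so `‖Φ(θ_n) − Φ(θ̃_n)‖_{L²(D)} = κ1·(π/4)^{1/2}` for all `n`,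
which does not tend to `0`: the level set parametrization is not uniformly continuous. -/
theorem stmt4 (κ1 κ2 : ℝ) (hκ1 : 0 < κ1) (hκ2 : 0 < κ2) :
    (∀ n : ℕ, 1 ≤ n → ∀ x ∈ Metric.ball (0 : EuclideanSpace ℝ (Fin 2)) (1 / 2),
        |θseq n x - (-θseq n x)| ≤ 2 / n + (2 : ℝ) ^ (1 - 2 * (n : ℤ))) ∧
    Tendsto (fun n : ℕ => 2 / (n : ℝ) + (2 : ℝ) ^ (1 - 2 * (n : ℤ))) atTop (nhds 0) ∧
    (∀ n : ℕ, 1 ≤ n → ∀ x ∈ Metric.ball (0 : EuclideanSpace ℝ (Fin 2)) (1 / 2),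
        phiLS κ1 κ2 (θseq n) x = κ1 + κ2 ∧
        phiLS κ1 κ2 (fun y => -θseq n y) x = κ2) ∧
    (∀ n : ℕ, 1 ≤ n →
        Real.sqrt (∫ x in Metric.ball (0 : EuclideanSpace ℝ (Fin 2)) (1 / 2),
            (phiLS κ1 κ2 (θseq n) x - phiLS κ1 κ2 (fun y => -θseq n y) x) ^ 2) =
          κ1 * Real.sqrt (π / 4)) ∧
    ¬ Tendsto (fun n : ℕ =>
        Real.sqrt (∫ x in Metric.ball (0 : EuclideanSpace ℝ (Fin 2)) (1 / 2),
            (phiLS κ1 κ2 (θseq n) x - phiLS κ1 κ2 (fun y => -θseq n y) x) ^ 2))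
      atTop (nhds 0) := by
  have hvol : volume.real (Metric.ball (0 : EuclideanSpace ℝ (Fin 2)) (1 / 2)) = π / 4 := by
    rw [volume_real_ball_fin_two 0 one_half_pos.le]
    ring
  simpa only [two_zpow_one_sub_two_mul, hvol, abs_of_pos hκ1] using
    stmt4_general κ1 κ2 hκ1.ne' one_half_lt_one Metric.ball_subset_closedBall
      (Metric.measure_ball_pos volume _ one_half_pos).ne'
end

section
/- Let X ⊆ ℝ^d be a bounded open set, c ∈ ℝ, and let θ0 be a real-valued function that is continuously differentiable on a neighborhood of the closure of X and such that ∇θ0(x) ≠ 0 for every x in the closure of X with θ0(x) = c. Then there exist constants C > 0 and ε0 > 0 such that for all 0 < ε ≤ ε0, the d-dimensional Lebesgue measure of the set V_ε = {x ∈ X : |θ0(x) − c| < ε} satisfies |V_ε| ≤ C·ε. -/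
open MeasureTheory

/-!
Near a regular point `x` of `f`, the implicit function theorem completes `f` to a chart `(f, g)`.
A chart shrinks Haar measure by at most a constant factor, and the chart carries `f ⁻¹' A` near `x`
into `A × g(s)` with `g(s)` bounded; hence `|s ∩ f ⁻¹' A| ≤ C |A|`. Near a point off the level set
`{f = c}`, the preimage of a small neighborhood of `c` is empty. Compactness of `closure X`
patches these local bounds together, and the claim is the case `A = (c - ε, c + ε)`.
-/

section DominatedPushforward

open Set Filter Topology Metric
open scoped NNReal ENNReal

section Basic

variable {E F : Type*} [MeasurableSpace E] [MeasurableSpace F] [TopologicalSpace F]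
  {μ : Measure E} {ν : Measure F} {f : E → F} {s t : Set E} {c : F}

/-- Near the point `c`, the pushforward under `f` of the restriction of `μ` to `s` is at most a
constant multiple of `ν`. The inequality is between outer measures and ranges over all small
sets `A`, so that neither `f` nor `s` has to be measurable. -/
def DominatedPushforwardNear (μ : Measure E) (ν : Measure F) (f : E → F) (s : Set E) (c : F) :
    Prop :=
  ∃ C : ℝ≥0, ∀ᶠ A in (𝓝 c).smallSets, μ (s ∩ f ⁻¹' A) ≤ C * ν A

namespace DominatedPushforwardNear

lemma mono (hst : s ⊆ t) (ht : DominatedPushforwardNear μ ν f t c) :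
    DominatedPushforwardNear μ ν f s c := by
  obtain ⟨C, hC⟩ := ht
  exact ⟨C, hC.mono fun A hA ↦ (measure_mono (inter_subset_inter_left _ hst)).trans hA⟩

lemma union (hs : DominatedPushforwardNear μ ν f s c)
    (ht : DominatedPushforwardNear μ ν f t c) : DominatedPushforwardNear μ ν f (s ∪ t) c := by
  obtain ⟨C, hC⟩ := hs
  obtain ⟨D, hD⟩ := ht
  refine ⟨C + D, ?_⟩
  filter_upwards [hC, hD] with A hCA hDA
  calc μ ((s ∪ t) ∩ f ⁻¹' A) ≤ μ (s ∩ f ⁻¹' A) + μ (t ∩ f ⁻¹' A) := by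
        rw [union_inter_distrib_right]
        exact measure_union_le _ _
    _ ≤ C * ν A + D * ν A := add_le_add hCA hDA
    _ = (C + D : ℝ≥0) * ν A := by rw [ENNReal.coe_add, add_mul]

lemma of_disjoint_image {V : Set F} (hV : V ∈ 𝓝 c) (hs : Disjoint (f '' s) V) :
    DominatedPushforwardNear μ ν f s c := by
  refine ⟨0, eventually_smallSets.2 ⟨V, hV, fun A hAV ↦ ?_⟩⟩
  have hempty : s ∩ f ⁻¹' A = ∅ :=
    (disjoint_image_left.1 (hs.mono_right hAV)).inter_eq
  simp [hempty]

lemma exists_measure_abs_sub_lt_le {f : E → ℝ} {c : ℝ}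
    (h : DominatedPushforwardNear μ volume f s c) :
    ∃ C : ℝ, 0 < C ∧ ∃ ε0 : ℝ, 0 < ε0 ∧ ∀ ε : ℝ, 0 < ε → ε ≤ ε0 →
      μ {x ∈ s | |f x - c| < ε} ≤ ENNReal.ofReal (C * ε) := by
  obtain ⟨C, hC⟩ := h
  obtain ⟨V, hV, hCV⟩ := eventually_smallSets.1 hC
  obtain ⟨ε0, hε0, hball⟩ := Metric.mem_nhds_iff.1 hV
  refine ⟨2 * (C + 1), by positivity, ε0, hε0, fun ε hε hle ↦ ?_⟩
  calc μ {x ∈ s | |f x - c| < ε} ≤ C * volume (ball c ε) :=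
        hCV _ ((ball_subset_ball hle).trans hball)
    _ = ENNReal.ofReal (C * (2 * ε)) := by
        rw [Real.volume_ball, ENNReal.ofReal_mul C.coe_nonneg, ENNReal.ofReal_coe_nnreal]
    _ ≤ ENNReal.ofReal (2 * (C + 1) * ε) := ENNReal.ofReal_le_ofReal (by linarith)

end DominatedPushforwardNear

lemma exists_dominatedPushforwardNear_of_ne [TopologicalSpace E] [T2Space F] (μ : Measure E)
    (ν : Measure F) {x : E} (hf : ContinuousWithinAt f s x) (hx : f x ≠ c) :
    ∃ t ∈ 𝓝[s] x, DominatedPushforwardNear μ ν f t c := by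
  obtain ⟨W, hW, V, hV, hWV⟩ := Filter.disjoint_iff.1 (disjoint_nhds_nhds.2 hx)
  exact ⟨f ⁻¹' W, hf hW, .of_disjoint_image hV (hWV.mono_left (image_preimage_subset f W))⟩

end Basic

variable {E F : Type*} [NormedAddCommGroup E] [NormedSpace ℝ E] [MeasurableSpace E]
  [BorelSpace E] [NormedAddCommGroup F] [NormedSpace ℝ F] [FiniteDimensional ℝ F]
  [MeasurableSpace F] [BorelSpace F]
  (μ : Measure E) [μ.IsAddHaarMeasure] (ν : Measure F) [ν.IsAddHaarMeasure]

lemma exists_measure_preimage_continuousLinearEquiv_eq_mul (e : E ≃L[ℝ] F) :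
    ∃ k : ℝ≥0, ∀ A : Set F, μ (e ⁻¹' A) = k * ν A := by
  refine ⟨(μ.map e).addHaarScalarFactor ν, fun A ↦ ?_⟩
  have : ProperSpace F := FiniteDimensional.proper_real F
  calc μ (e ⁻¹' A) = μ.map e A := (e.toHomeomorph.measurableEmbedding.map_apply μ A).symm
    _ = (μ.map e).addHaarScalarFactor ν * ν A :=
      DFunLike.congr_fun (Measure.isAddLeftInvariant_eq_smul (μ.map e) ν) A

variable [FiniteDimensional ℝ E]

lemma exists_measure_le_two_mul_measure_image {h : E → E} {x : E}
    (hh : HasStrictFDerivAt h (.id ℝ E) x) :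
    ∃ s ∈ 𝓝 x, ∀ t ⊆ s, μ t ≤ 2 * μ (h '' t) := by
  have hdet : ((2⁻¹ : ℝ≥0) : ℝ≥0∞) < ENNReal.ofReal |(ContinuousLinearMap.id ℝ E).det| := by
    simp [ContinuousLinearMap.det]
  obtain ⟨δ, hδ, hδ0⟩ :=
    ((mul_le_addHaar_image_of_lt_det μ _ hdet).and self_mem_nhdsWithin).exists
  obtain ⟨s, hs, happrox⟩ := hh.approximates_deriv_on_nhds (Or.inr hδ0)
  refine ⟨s, hs, fun t hts ↦ ?_⟩
  have hle : ((2⁻¹ : ℝ≥0) : ℝ≥0∞) * μ t ≤ μ (h '' t) := hδ t h (happrox.mono_set hts)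
  rwa [ENNReal.coe_inv two_ne_zero, ENNReal.coe_ofNat,
    ENNReal.inv_mul_le_iff two_ne_zero ENNReal.ofNat_ne_top] at hle

lemma exists_measure_le_mul_measure_image {g : E → F} {e : E ≃L[ℝ] F} {x : E}
    (hg : HasStrictFDerivAt g (e : E →L[ℝ] F) x) :
    ∃ C : ℝ≥0, ∃ s ∈ 𝓝 x, ∀ t ⊆ s, μ t ≤ C * ν (g '' t) := by
  have hid : HasStrictFDerivAt (e.symm ∘ g) (.id ℝ E) x := by
    simpa [Function.comp_def] using e.symm.hasStrictFDerivAt.comp x hg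
  obtain ⟨s, hs, hμ⟩ := exists_measure_le_two_mul_measure_image μ hid
  obtain ⟨k, hk⟩ := exists_measure_preimage_continuousLinearEquiv_eq_mul μ ν e
  refine ⟨2 * k, s, hs, fun t hts ↦ (hμ t hts).trans_eq ?_⟩
  rw [image_comp, e.symm.image_eq_preimage_symm, e.symm_symm, hk, ENNReal.coe_mul, mul_assoc]
  rfl

theorem exists_dominatedPushforwardNear_of_hasStrictFDerivAt {f : E → F} {f' : E →L[ℝ] F} {x : E}
    (hf : HasStrictFDerivAt f f' x) (hf' : f'.range = ⊤) (c : F) :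
    ∃ s ∈ 𝓝 x, DominatedPushforwardNear μ ν f s c := by
  have : CompleteSpace E := FiniteDimensional.complete ℝ E
  have : CompleteSpace F := FiniteDimensional.complete ℝ F
  let φ := hf.implicitFunctionDataOfComplemented f f' hf'
    f'.ker_closedComplemented_of_finiteDimensional_range
  let κ : Measure f'.ker := Measure.addHaar
  obtain ⟨C, s, hs, hC⟩ := exists_measure_le_mul_measure_image μ (ν.prod κ) φ.hasStrictFDerivAt
  let B : Set f'.ker := ball (φ.rightFun x) 1
  have hB : φ.rightFun ⁻¹' B ∈ 𝓝 x :=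
    φ.hasStrictFDerivAt_rightFun.continuousAt (ball_mem_nhds _ one_pos)
  refine ⟨s ∩ φ.rightFun ⁻¹' B, inter_mem hs hB, C * (κ B).toNNReal, .of_forall fun A ↦ ?_⟩
  have himage : φ.prodFun '' (s ∩ φ.rightFun ⁻¹' B ∩ f ⁻¹' A) ⊆ A ×ˢ B := by
    rintro _ ⟨y, ⟨⟨-, hyB⟩, hyA⟩, rfl⟩
    exact ⟨hyA, hyB⟩
  calc μ (s ∩ φ.rightFun ⁻¹' B ∩ f ⁻¹' A)
      ≤ C * (ν.prod κ) (φ.prodFun '' (s ∩ φ.rightFun ⁻¹' B ∩ f ⁻¹' A)) :=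
        hC _ (inter_subset_left.trans inter_subset_left)
    _ ≤ C * (ν.prod κ) (A ×ˢ B) := by gcongr
    _ = (C * (κ B).toNNReal : ℝ≥0) * ν A := by
        rw [Measure.prod_prod, ENNReal.coe_mul, ENNReal.coe_toNNReal measure_ball_lt_top.ne]
        ring

theorem dominatedPushforwardNear_of_isCompact {K : Set E} {f : E → F} {c : F} (hK : IsCompact K)
    (hf : ContinuousOn f K)
    (hreg : ∀ x ∈ K, f x = c → ∃ f' : E →L[ℝ] F, f'.range = ⊤ ∧ HasStrictFDerivAt f f' x) :
    DominatedPushforwardNear μ ν f K c := by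
  refine hK.induction_on (.of_disjoint_image univ_mem (by simp)) (fun _ _ hst ht ↦ ht.mono hst)
    (fun _ _ hs ht ↦ hs.union ht) fun x hx ↦ ?_
  by_cases hxc : f x = c
  · obtain ⟨f', hf', hfx⟩ := hreg x hx hxc
    obtain ⟨s, hs, hdom⟩ := exists_dominatedPushforwardNear_of_hasStrictFDerivAt μ ν hfx hf' c
    exact ⟨s, mem_nhdsWithin_of_mem_nhds hs, hdom⟩
  · exact exists_dominatedPushforwardNear_of_ne μ ν (hf x hx) hxc

theorem stmt5_general {X : Set E} (hX : Bornology.IsBounded X) {f : E → ℝ} {c : ℝ}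
    (hf : ContinuousOn f (closure X))
    (hreg : ∀ x ∈ closure X, f x = c → ∃ f' : E →L[ℝ] ℝ, f' ≠ 0 ∧ HasStrictFDerivAt f f' x) :
    ∃ C : ℝ, 0 < C ∧ ∃ ε0 : ℝ, 0 < ε0 ∧ ∀ ε : ℝ, 0 < ε → ε ≤ ε0 →
      μ {x ∈ X | |f x - c| < ε} ≤ ENNReal.ofReal (C * ε) := by
  have : ProperSpace E := FiniteDimensional.proper_real E
  have hdom : DominatedPushforwardNear μ volume f (closure X) c := by
    refine dominatedPushforwardNear_of_isCompact μ volume hX.isCompact_closure hf fun x hx hxc ↦ ?_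
    obtain ⟨f', hf', hfx⟩ := hreg x hx hxc
    have hsurj : Function.Surjective f' :=
      LinearMap.surjective (ContinuousLinearMap.coe_injective.ne hf')
    exact ⟨f', LinearMap.range_eq_top.2 hsurj, hfx⟩
  exact (hdom.mono subset_closure).exists_measure_abs_sub_lt_le

end DominatedPushforward

/-- If `X ⊆ ℝ^d` is bounded and open, `θ0` is `C¹` on a neighborhood of `closure X`, and
`∇θ0 ≠ 0` at every point of `closure X` on the level set `{θ0 = c}`, then there are
`C > 0` and `ε0 > 0` with `|{x ∈ X : |θ0(x) − c| < ε}| ≤ C·ε` for all `0 < ε ≤ ε0`. -/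
theorem stmt5 (d : ℕ) (X : Set (EuclideanSpace ℝ (Fin d))) (hXopen : IsOpen X)
    (hXbdd : Bornology.IsBounded X) (c : ℝ) (θ0 : EuclideanSpace ℝ (Fin d) → ℝ)
    (U : Set (EuclideanSpace ℝ (Fin d))) (hU : IsOpen U) (hXU : closure X ⊆ U)
    (hθ : ContDiffOn ℝ 1 θ0 U)
    (hgrad : ∀ x ∈ closure X, θ0 x = c → fderiv ℝ θ0 x ≠ 0) :
    ∃ C : ℝ, 0 < C ∧ ∃ ε0 : ℝ, 0 < ε0 ∧ ∀ ε : ℝ, 0 < ε → ε ≤ ε0 →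
      volume {x ∈ X | |θ0 x - c| < ε} ≤ ENNReal.ofReal (C * ε) := by
  exact stmt5_general volume hXbdd (hθ.continuousOn.mono hXU) fun x hx hxc ↦
    ⟨fderiv ℝ θ0 x, hgrad x hx hxc,
      (hθ.contDiffAt (hU.mem_nhds (hXU hx))).hasStrictFDerivAt one_ne_zero⟩
end

section
/- Let X ⊆ ℝ^d be a bounded open set and D ⊆ X a measurable set. Let N ≥ 1, κ1, …, κ_N > 0, and −∞ = c_0 < c_1 < … < c_{N−1} < c_N = ∞. Let θ0 be a real-valued function that is twice continuously differentiable on a neighborhood of the closure of X such that, for each i = 1, …, N−1 and each x in the closure of X with θ0(x) = c_i, one has ∇θ0(x) ≠ 0. Then there exist constants C > 0 and ε0 > 0, depending on θ0, X, D and the levels c_i, such that for all 0 < ε ≤ ε0, ‖Φ_ε(θ0) − Φ(θ0)‖_{L²(D)} ≤ C·ε^{1/2}. -/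
open MeasureTheory

/-- Piecewise linear approximation `H_ε` of the Heaviside function. -/
noncomputable def Heps (ε z : ℝ) : ℝ :=
  if z < -ε then 0 else if z < ε then z / (2 * ε) + 1 / 2 else 1

/-- The term `H_ε(z − c_j)` with the conventions `H_ε(z − c_0) := 1`, `H_ε(z − c_N) := 0`. -/
noncomputable def HepsTerm (ε : ℝ) (N : ℕ) (cs : Fin (N + 1) → ℝ)
    (j : Fin (N + 1)) (z : ℝ) : ℝ :=
  if j.val = 0 then 1 else if j.val = N then 0 else Heps ε (z - cs j)

/-- The continuous level set parametrization
`Φ_ε(θ) = Σ_{i=1}^{N} κ_i·[H_ε(θ − c_{i−1}) − H_ε(θ − c_i)]`. -/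
noncomputable def PhiEps {α : Type*} (ε : ℝ) (N : ℕ) (cs : Fin (N + 1) → ℝ)
    (κ : Fin N → ℝ) (θ : α → ℝ) (x : α) : ℝ :=
  ∑ i : Fin N, κ i * (HepsTerm ε N cs i.castSucc (θ x) - HepsTerm ε N cs i.succ (θ x))

/-- The level set parametrization `Φ(θ) = Σ_{i=1}^{N} κ_i·1_{{c_{i−1} ≤ θ < c_i}}`, with
`c_0 = −∞` and `c_N = ∞` (no lower constraint for `i = 1`, no upper for `i = N`). -/
noncomputable def PhiLevel {α : Type*} (N : ℕ) (cs : Fin (N + 1) → ℝ)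
    (κ : Fin N → ℝ) (θ : α → ℝ) (x : α) : ℝ :=
  ∑ i : Fin N, κ i *
    Set.indicator
      {z : ℝ | (i.val = 0 ∨ cs i.castSucc ≤ z) ∧ (i.val = N - 1 ∨ z < cs i.succ)}
      (fun _ => (1 : ℝ)) (θ x)

/-!
Outside the layer `{|θ0 - c_i| ≤ ε for some i}` the functions `Φ_ε(θ0)` and `Φ(θ0)` agree, and
inside it their difference is bounded independently of `ε`, so the squared `L²` norm is at most a
constant times the measure of the layer. That measure is `O(ε)`: where `f` has a surjective
derivative `L`, with right inverse `R`, the map `g y = y + R (f y - L y)` satisfies `L ∘ g = f` and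
has derivative the identity. Locally `g` hence distorts measures by at most a constant factor and
straightens `f ⁻¹' t` into `L ⁻¹' t`, whose measure in a bounded set is controlled by Fubini.
-/

section RegularValues

open Filter Metric Topology
open scoped NNReal

variable {E : Type*} [NormedAddCommGroup E] [NormedSpace ℝ E] [FiniteDimensional ℝ E]
  [MeasurableSpace E] [BorelSpace E] (μ : Measure E) [μ.IsAddHaarMeasure]

theorem exists_eventually_measure_le_mul_measure_image {g : E → E} {A : E →L[ℝ] E} {x : E}
    (hg : HasStrictFDerivAt g A x) (hA : A.det ≠ 0) :
    ∃ C : ℝ≥0, ∀ᶠ s in (𝓝 x).smallSets, μ s ≤ C * μ (g '' s) := by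
  obtain ⟨m, hm, hmA⟩ : ∃ m : ℝ≥0, 0 < (m : ENNReal) ∧ m < ENNReal.ofReal |A.det| :=
    ENNReal.lt_iff_exists_nnreal_btwn.1 (ENNReal.ofReal_pos.2 (abs_pos.2 hA))
  obtain ⟨δ, hδ, hδ0⟩ :=
    ((mul_le_addHaar_image_of_lt_det μ A hmA).and self_mem_nhdsWithin).exists
  obtain ⟨V, hV, hgV⟩ := hg.approximates_deriv_on_nhds (c := δ) (Or.inr hδ0)
  refine ⟨m⁻¹, eventually_smallSets.2 ⟨V, hV, fun s hs => ?_⟩⟩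
  rw [ENNReal.coe_inv (ENNReal.coe_pos.1 hm).ne',
    ← ENNReal.mul_le_iff_le_inv hm.ne' ENNReal.coe_ne_top]
  exact hδ s g (hgV.mono_set hs)

variable {F : Type*} [NormedAddCommGroup F] [NormedSpace ℝ F] [FiniteDimensional ℝ F]
  [MeasurableSpace F] [BorelSpace F] (ν : Measure F) [ν.IsAddHaarMeasure]

theorem exists_measure_inter_preimage_le_of_isBounded {L : E →L[ℝ] F} (hL : L.range = ⊤) {s : Set E}
    (hs : Bornology.IsBounded s) :
    ∃ C : ℝ≥0, ∀ t : Set F, μ (s ∩ L ⁻¹' t) ≤ C * ν t := by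
  obtain ⟨R, hR⟩ := L.exists_rightInverse_of_surjective hL
  let e := ContinuousLinearEquiv.equivOfRightInverse L R fun y => congr($hR y)
  let ρ : Measure L.ker := Measure.addHaar
  have : (μ.map e).IsAddHaarMeasure := e.isAddHaarMeasure_map μ
  let k := (μ.map e).addHaarScalarFactor (ν.prod ρ)
  have hk : μ.map e = k • ν.prod ρ := Measure.isAddLeftInvariant_eq_smul _ _
  let B : Set L.ker := Prod.snd '' (e '' s)
  have hB : ρ B ≠ ⊤ :=
    (hs.image (e : E →L[ℝ] F × L.ker)).image_snd.measure_lt_top.ne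
  refine ⟨k * (ρ B).toNNReal, fun t => ?_⟩
  calc μ (s ∩ L ⁻¹' t) ≤ μ (e ⁻¹' (t ×ˢ B)) :=
        measure_mono fun y hy => ⟨hy.2, e y, Set.mem_image_of_mem e hy.1, rfl⟩
    _ = (k • ν.prod ρ) (t ×ˢ B) := by
        rw [← hk]
        exact (e.toHomeomorph.toMeasurableEquiv.map_apply _).symm
    _ = ↑(k * (ρ B).toNNReal) * ν t := by
        rw [Measure.smul_apply, Measure.prod_prod, ENNReal.coe_mul, ENNReal.coe_toNNReal hB,
          ENNReal.smul_def, smul_eq_mul]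
        ring

theorem exists_mem_nhds_measure_inter_preimage_le {f : E → F} {L : E →L[ℝ] F} {x : E}
    (hf : HasStrictFDerivAt f L x) (hL : L.range = ⊤) :
    ∃ V ∈ 𝓝 x, ∃ C : ℝ≥0, ∀ t : Set F, μ (V ∩ f ⁻¹' t) ≤ C * ν t := by
  obtain ⟨R, hR⟩ := L.exists_rightInverse_of_surjective hL
  let g : E → E := fun y => y + R (f y - L y)
  have hg : HasStrictFDerivAt g (.id ℝ E) x := by
    have h := (hasStrictFDerivAt_id x).add
      (R.hasStrictFDerivAt.comp x (hf.sub L.hasStrictFDerivAt))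
    rwa [sub_self, ContinuousLinearMap.comp_zero, add_zero] at h
  have hLg (y : E) : L (g y) = f y := by
    have : L (R (f y - L y)) = f y - L y := congr($hR _)
    simp only [g, map_add, this, add_sub_cancel]
  obtain ⟨C₁, hC₁⟩ := exists_eventually_measure_le_mul_measure_image μ hg
    (LinearMap.det_id.trans_ne one_ne_zero)
  obtain ⟨V, hV, hVC₁⟩ := eventually_smallSets.1 hC₁
  obtain ⟨C₂, hC₂⟩ := exists_measure_inter_preimage_le_of_isBounded μ ν hL
    (isBounded_closedBall (x := g x) (r := 1))
  let W : Set E := V ∩ g ⁻¹' closedBall (g x) 1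
  refine ⟨W, inter_mem hV (hg.continuousAt (closedBall_mem_nhds _ one_pos)), C₁ * C₂, fun t => ?_⟩
  have hgW : g '' (W ∩ f ⁻¹' t) ⊆ closedBall (g x) 1 ∩ L ⁻¹' t := by
    rintro _ ⟨y, ⟨⟨-, hy⟩, hyt⟩, rfl⟩
    exact ⟨hy, by rwa [Set.mem_preimage, hLg]⟩
  calc μ (W ∩ f ⁻¹' t) ≤ C₁ * μ (g '' (W ∩ f ⁻¹' t)) :=
        hVC₁ _ (Set.inter_subset_left.trans Set.inter_subset_left)
    _ ≤ C₁ * (C₂ * ν t) := by grw [hgW, hC₂]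
    _ = ↑(C₁ * C₂) * ν t := by rw [ENNReal.coe_mul, mul_assoc]

theorem exists_eventually_measure_inter_preimage_le_of_isCompact {f : E → F} {f' : E → E →L[ℝ] F}
    {K : Set E} {S : Set F} (hK : IsCompact K) (hS : IsClosed S) (hfK : ContinuousOn f K)
    (hf : ∀ x ∈ K, f x ∈ S → HasStrictFDerivAt f (f' x) x)
    (hf' : ∀ x ∈ K, f x ∈ S → (f' x).range = ⊤) :
    ∃ C : ℝ≥0, ∀ᶠ t in (𝓝ˢ S).smallSets, μ (K ∩ f ⁻¹' t) ≤ C * ν t := by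
  refine hK.induction_on
    (p := fun s => ∃ C : ℝ≥0, ∀ᶠ t in (𝓝ˢ S).smallSets, μ (s ∩ f ⁻¹' t) ≤ C * ν t) ?_ ?_ ?_ ?_
  · exact ⟨0, by simp⟩
  · rintro s s' hss' ⟨C, hC⟩
    refine ⟨C, hC.mono fun t ht => ?_⟩
    grw [hss', ht]
  · rintro s s' ⟨C, hC⟩ ⟨C', hC'⟩
    refine ⟨C + C', (hC.and hC').mono fun t ⟨ht, ht'⟩ => ?_⟩
    grw [Set.union_inter_distrib_right, measure_union_le, ht, ht', ENNReal.coe_add, add_mul]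
  · intro x hx
    by_cases hxS : f x ∈ S
    · obtain ⟨V, hV, C, hC⟩ :=
        exists_mem_nhds_measure_inter_preimage_le μ ν (hf x hx hxS) (hf' x hx hxS)
      exact ⟨V, mem_nhdsWithin_of_mem_nhds hV, C, .of_forall hC⟩
    · obtain ⟨u, hu, v, hv, huv⟩ :=
        Filter.disjoint_iff.1 (disjoint_nhdsSet_nhds.2 (hS.closure_eq.symm ▸ hxS))
      refine ⟨f ⁻¹' v, hfK x hx hv, 0, eventually_smallSets.2 ⟨u, hu, fun t ht => ?_⟩⟩
      rw [← Set.preimage_inter, (huv.symm.mono_right ht).inter_eq]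
      simp

theorem volume_cthickening_le_of_finite {S : Set ℝ} (hS : S.Finite) {ε : ℝ} (hε : 0 ≤ ε) :
    volume (cthickening ε S) ≤ S.ncard * ENNReal.ofReal (2 * ε) := by
  rw [hS.isCompact.cthickening_eq_biUnion_closedBall hε]
  lift S to Finset ℝ using hS
  calc volume (⋃ c ∈ S, closedBall c ε) ≤ ∑ c ∈ S, volume (closedBall c ε) :=
        measure_biUnion_finset_le _ _
    _ = (S : Set ℝ).ncard * ENNReal.ofReal (2 * ε) := by simp [Real.volume_closedBall]

theorem exists_measure_inter_preimage_cthickening_le {f : E → ℝ} {f' : E → E →L[ℝ] ℝ} {K : Set E}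
    {S : Set ℝ} (hK : IsCompact K) (hS : S.Finite) (hfK : ContinuousOn f K)
    (hf : ∀ x ∈ K, f x ∈ S → HasStrictFDerivAt f (f' x) x)
    (hf' : ∀ x ∈ K, f x ∈ S → f' x ≠ 0) :
    ∃ C : ℝ≥0, ∃ ε₀ > 0, ∀ ε, 0 ≤ ε → ε ≤ ε₀ →
      μ (K ∩ f ⁻¹' cthickening ε S) ≤ C * ENNReal.ofReal ε := by
  obtain ⟨C, hC⟩ := exists_eventually_measure_inter_preimage_le_of_isCompact μ volume hK
    hS.isClosed hfK hf fun x hx hxS => LinearMap.range_eq_top.2 <| LinearMap.surjective <|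
      ContinuousLinearMap.coe_injective.ne (hf' x hx hxS)
  obtain ⟨ε₀, hε₀, hε₀C⟩ :=
    (hasBasis_nhdsSet_cthickening hS.isCompact).smallSets.eventually_iff.1 hC
  refine ⟨C * (S.ncard * 2), ε₀, hε₀, fun ε hε hεε₀ => ?_⟩
  calc μ (K ∩ f ⁻¹' cthickening ε S) ≤ C * volume (cthickening ε S) :=
        hε₀C (cthickening_mono hεε₀ S)
    _ ≤ C * (S.ncard * ENNReal.ofReal (2 * ε)) := by grw [volume_cthickening_le_of_finite hS hε]
    _ = ↑(C * (S.ncard * 2)) * ENNReal.ofReal ε := by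
        rw [ENNReal.ofReal_mul zero_le_two]
        push_cast
        rw [ENNReal.ofReal_ofNat]
        ring

end RegularValues

section Heaviside

open Metric Set

theorem heps_mem_Icc (ε z : ℝ) : Heps ε z ∈ Icc 0 1 := by
  rw [Heps]
  split_ifs
  · simp
  · have hlin : z / (2 * ε) + 1 / 2 = (z + ε) / (2 * ε) := by
      have : ε ≠ 0 := by linarith
      field_simp
    rw [hlin]
    exact ⟨div_nonneg (by linarith) (by linarith), div_le_one_of_le₀ (by linarith) (by linarith)⟩
  · simp

-- At `ε = 0` the linear branch of `Heps` is empty, so `Heps 0`, `HepsTerm 0` and `PhiEps 0` are the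
-- sharp objects and no division by zero occurs.
theorem heps_zero (z : ℝ) : Heps 0 z = if 0 ≤ z then 1 else 0 := by
  grind [Heps]

theorem heps_eq_heps_zero {ε z : ℝ} (hε : 0 ≤ ε) (hz : ε < |z|) : Heps ε z = Heps 0 z := by
  grind [Heps]

variable {N : ℕ} {cs : Fin (N + 1) → ℝ}

theorem hepsTerm_mem_Icc (ε : ℝ) (j : Fin (N + 1)) (z : ℝ) :
    HepsTerm ε N cs j z ∈ Icc 0 1 := by
  rw [HepsTerm]
  split_ifs
  · simp
  · simp
  · exact heps_mem_Icc ε _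

theorem hepsTerm_eq_hepsTerm_zero {ε z : ℝ} {j : Fin (N + 1)} (hε : 0 ≤ ε)
    (hz : j ∈ Ioo 0 (Fin.last N) → ε < |z - cs j|) :
    HepsTerm ε N cs j z = HepsTerm 0 N cs j z := by
  unfold HepsTerm
  split_ifs with h0 hN
  · rfl
  · rfl
  · refine heps_eq_heps_zero hε (hz ?_)
    simp only [mem_Ioo, Fin.lt_def, Fin.val_zero, Fin.val_last]
    omega

variable {α : Type*} {κ : Fin N → ℝ} {θ : α → ℝ}

theorem phiEps_zero (hcs : MonotoneOn cs (Ioo 0 (Fin.last N))) (x : α) :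
    PhiEps 0 N cs κ θ x = PhiLevel N cs κ θ x := by
  refine Finset.sum_congr rfl fun i _ => congrArg (κ i * ·) ?_
  have hi := i.isLt
  have hlast : i.val = N - 1 ↔ i.val + 1 = N := by omega
  have hle (h0 : i.val ≠ 0) (hN : i.val + 1 ≠ N) : cs i.castSucc ≤ cs i.succ := by
    refine hcs ?_ ?_ Fin.castSucc_lt_succ.le <;>
      simp only [mem_Ioo, Fin.lt_def, Fin.val_zero, Fin.val_last, Fin.val_castSucc,
        Fin.val_succ] <;> omega
  simp only [HepsTerm, heps_zero, Fin.val_castSucc, Fin.val_succ, indicator_apply,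
    mem_ofPred_eq, hlast, sub_nonneg]
  grind

theorem abs_phiEps_le (ε : ℝ) (x : α) : |PhiEps ε N cs κ θ x| ≤ ∑ i, |κ i| := by
  refine (Finset.abs_sum_le_sum_abs _ _).trans (Finset.sum_le_sum fun i _ => ?_)
  obtain ⟨hleft_nonneg, hleft_le_one⟩ := hepsTerm_mem_Icc (cs := cs) ε i.castSucc (θ x)
  obtain ⟨hright_nonneg, hright_le_one⟩ := hepsTerm_mem_Icc (cs := cs) ε i.succ (θ x)
  rw [abs_mul]
  refine mul_le_of_le_one_right (abs_nonneg _) (abs_le.2 ⟨?_, ?_⟩) <;> linarith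

/-- The set `{c_1, …, c_{N-1}}` of actual thresholds: the end values `cs 0` and `cs (Fin.last N)`
stand for `-∞` and `∞` and are left out. -/
def finiteLevels (cs : Fin (N + 1) → ℝ) : Set ℝ := cs '' Ioo 0 (Fin.last N)

theorem phiEps_eq_phiEps_zero {ε : ℝ} (hε : 0 ≤ ε) {x : α}
    (hx : θ x ∉ cthickening ε (finiteLevels cs)) :
    PhiEps ε N cs κ θ x = PhiEps 0 N cs κ θ x := by
  have hterm (j : Fin (N + 1)) : HepsTerm ε N cs j (θ x) = HepsTerm 0 N cs j (θ x) :=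
    hepsTerm_eq_hepsTerm_zero hε fun hj => not_le.1 fun hle =>
      hx (mem_cthickening_of_dist_le _ _ _ _ (mem_image_of_mem cs hj) hle)
  simp only [PhiEps, hterm]

theorem integral_sq_phiEps_sub_phiLevel_le [MeasurableSpace α] (μ : Measure α)
    (hcs : MonotoneOn cs (Ioo 0 (Fin.last N))) {ε : ℝ} (hε : 0 ≤ ε)
    (hμ : μ (θ ⁻¹' cthickening ε (finiteLevels cs)) ≠ ⊤) :
    ∫ x, (PhiEps ε N cs κ θ x - PhiLevel N cs κ θ x) ^ 2 ∂μ ≤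
      (2 * ∑ i, |κ i|) ^ 2 * μ.real (θ ⁻¹' cthickening ε (finiteLevels cs)) := by
  simp only [← phiEps_zero hcs]
  rw [← setIntegral_eq_integral_of_forall_compl_eq_zero fun x hx => by
    rw [phiEps_eq_phiEps_zero hε hx, sub_self, zero_pow two_ne_zero]]
  refine (Real.le_norm_self _).trans (norm_setIntegral_le_of_norm_le_const hμ.lt_top fun x _ => ?_)
  rw [norm_pow, two_mul]
  gcongr
  exact (norm_sub_le _ _).trans (add_le_add (abs_phiEps_le ε x) (abs_phiEps_le 0 x))

end Heaviside

theorem stmt6_general {E : Type*} [NormedAddCommGroup E] [NormedSpace ℝ E] [FiniteDimensional ℝ E]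
    [MeasurableSpace E] [BorelSpace E] (μ : Measure E) [μ.IsAddHaarMeasure] {K D : Set E}
    (hK : IsCompact K) (hDK : D ⊆ K) {N : ℕ} (κ : Fin N → ℝ) {cs : Fin (N + 1) → ℝ}
    (hcs : MonotoneOn cs (Set.Ioo 0 (Fin.last N))) {θ : E → ℝ} {θ' : E → E →L[ℝ] ℝ}
    (hθK : ContinuousOn θ K)
    (hθ : ∀ x ∈ K, θ x ∈ finiteLevels cs → HasStrictFDerivAt θ (θ' x) x)
    (hθ' : ∀ x ∈ K, θ x ∈ finiteLevels cs → θ' x ≠ 0) :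
    ∃ C : ℝ, 0 < C ∧ ∃ ε0 : ℝ, 0 < ε0 ∧ ∀ ε : ℝ, 0 < ε → ε ≤ ε0 →
      √(∫ x in D, (PhiEps ε N cs κ θ x - PhiLevel N cs κ θ x) ^ 2 ∂μ) ≤ C * √ε := by
  obtain ⟨C, ε₀, hε₀, hC⟩ := exists_measure_inter_preimage_cthickening_le μ hK
    ((Set.toFinite _).image cs) hθK hθ hθ'
  let M : ℝ := 2 * ∑ i, |κ i|
  refine ⟨√(M ^ 2 * C) + 1, by positivity, ε₀, hε₀, fun ε hε hεε₀ => ?_⟩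
  let T : Set E := θ ⁻¹' Metric.cthickening ε (finiteLevels cs)
  have hT : μ.restrict D T ≤ ENNReal.ofReal (C * ε) := by
    calc μ.restrict D T ≤ μ.restrict K T := Measure.restrict_mono_set μ hDK T
      _ = μ (K ∩ T) := by rw [Measure.restrict_apply' hK.measurableSet, Set.inter_comm]
      _ ≤ C * ENNReal.ofReal ε := hC ε hε.le hεε₀
      _ = ENNReal.ofReal (C * ε) := by
        rw [ENNReal.ofReal_mul C.coe_nonneg, ENNReal.ofReal_coe_nnreal]
  calc √(∫ x in D, (PhiEps ε N cs κ θ x - PhiLevel N cs κ θ x) ^ 2 ∂μ)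
      ≤ √(M ^ 2 * (μ.restrict D).real T) := Real.sqrt_le_sqrt <|
        integral_sq_phiEps_sub_phiLevel_le _ hcs hε.le (hT.trans_lt ENNReal.ofReal_lt_top).ne
    _ ≤ √(M ^ 2 * (C * ε)) := by
        gcongr
        exact ENNReal.toReal_le_of_le_ofReal (by positivity) hT
    _ = √(M ^ 2 * C) * √ε := by rw [← mul_assoc, Real.sqrt_mul (by positivity)]
    _ ≤ (√(M ^ 2 * C) + 1) * √ε := by gcongr; exact le_add_of_nonneg_right zero_le_one

/-- Approximation property of the smoothened level set parametrization: if `θ0` is `C²`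
near `closure X` with nonvanishing gradient on each level set `{θ0 = c_i}`, then
`‖Φ_ε(θ0) − Φ(θ0)‖_{L²(D)} ≤ C·ε^{1/2}` for all sufficiently small `ε > 0`. -/
theorem stmt6 (d : ℕ) (X : Set (EuclideanSpace ℝ (Fin d))) (hXopen : IsOpen X)
    (hXbdd : Bornology.IsBounded X) (D : Set (EuclideanSpace ℝ (Fin d)))
    (hD : MeasurableSet D) (hDX : D ⊆ X)
    (N : ℕ) (hN : 1 ≤ N) (κ : Fin N → ℝ) (hκ : ∀ i, 0 < κ i)
    (cs : Fin (N + 1) → ℝ)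
    (hmono : ∀ i j : Fin (N + 1), i < j → 0 < i.val → j.val < N → cs i < cs j)
    (θ0 : EuclideanSpace ℝ (Fin d) → ℝ)
    (U : Set (EuclideanSpace ℝ (Fin d))) (hU : IsOpen U) (hXU : closure X ⊆ U)
    (hθ : ContDiffOn ℝ 2 θ0 U)
    (hgrad : ∀ j : Fin (N + 1), 0 < j.val → j.val < N →
      ∀ x ∈ closure X, θ0 x = cs j → fderiv ℝ θ0 x ≠ 0) :
    ∃ C : ℝ, 0 < C ∧ ∃ ε0 : ℝ, 0 < ε0 ∧ ∀ ε : ℝ, 0 < ε → ε ≤ ε0 →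
      Real.sqrt (∫ x in D, (PhiEps ε N cs κ θ0 x - PhiLevel N cs κ θ0 x) ^ 2) ≤
        C * Real.sqrt ε := by
  exact stmt6_general volume hXbdd.isCompact_closure (hDX.trans subset_closure) κ
    (StrictMonoOn.monotoneOn fun i hi j hj hij => hmono i j hij hi.1 hj.2)
    (hθ.continuousOn.mono hXU)
    (fun x hx _ => (hθ.contDiffAt (hU.mem_nhds (hXU hx))).hasStrictFDerivAt two_ne_zero)
    fun x hx ⟨j, hj, hjx⟩ => hgrad j hj.1 hj.2 x hx hjx.symm
end
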